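/- arXiv:2011.10876 — 5 statements merged into one kernel-verified Lean document; each statement's English description precedes it below -/
import Mathlib

section
/- Suppose that for each i ∈ ℕ the set A_i ⊆ ℝ^{n_i} is nonempty and closed, the family (A_i)_{i∈ℕ} is uniformly bounded, and there exist κ₁, κ₂ of class K∞ such that one of the following two conditions holds for all i ∈ ℕ and all ξ_i ∈ ℝ^{n_i}, ξ̄_i ∈ X(I_i), μ_i ∈ ℝ^{p_i}: (a) |f_i(ξ_i, ξ̄_i, μ_i)|_{A_i} ≤ κ₁(|ξ_i|_{A_i}) + κ₂(|ξ̄_i|) + κ₂(|μ_i|), or (b) |f_i(ξ_i, ξ̄_i, μ_i)|_{A_i} ≤ κ₁(|ξ_i|_{A_i}) + κ₂(max_{j∈I_i} |ξ_j|_{A_j}) + κ₂(|μ_i|). Then the network Σ is well-posed. -/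
noncomputable section

/-- Class `K` comparison functions on `[0,∞)`. -/
def ClassK (γ : ℝ → ℝ) : Prop :=
  ContinuousOn γ (Set.Ici 0) ∧ StrictMonoOn γ (Set.Ici 0) ∧ γ 0 = 0

/-- Class `K∞` comparison functions: class `K` and unbounded. -/
def ClassKinf (γ : ℝ → ℝ) : Prop :=
  ClassK γ ∧ ∀ c : ℝ, ∃ s : ℝ, 0 ≤ s ∧ c < γ s

/-- Class `KL` comparison functions. -/
def ClassKL (β : ℝ → ℝ → ℝ) : Prop :=
  ContinuousOn (fun p : ℝ × ℝ => β p.1 p.2) (Set.Ici 0 ×ˢ Set.Ici 0) ∧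
    (∀ t : ℝ, 0 ≤ t → ClassK fun r => β r t) ∧
    (∀ r : ℝ, 0 < r → StrictAntiOn (β r) (Set.Ici 0) ∧
      Filter.Tendsto (fun t => β r t) Filter.atTop (nhds 0))

section Network

variable {E : ℕ → Type*} [∀ i, NormedAddCommGroup (E i)]
variable {P : ℕ → Type*} [∀ i, NormedAddCommGroup (P i)]

/-- Membership in `ℓ∞(ℕ,(n_i))`: a uniformly bounded sequence. -/
def Bdd {G : ℕ → Type*} [∀ i, NormedAddCommGroup (G i)] (x : ∀ i, G i) : Prop :=
  ∃ C : ℝ, ∀ i, ‖x i‖ ≤ C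

/-- The sup norm `|x|_∞ = sup_i |x_i|`. -/
def supNorm {G : ℕ → Type*} [∀ i, NormedAddCommGroup (G i)] (x : ∀ i, G i) : ℝ :=
  ⨆ i, ‖x i‖

/-- Admissible external input signals: uniformly bounded sequences in `U`. -/
def AdmInput {G : ℕ → Type*} [∀ i, NormedAddCommGroup (G i)] (u : ℕ → ∀ i, G i) : Prop :=
  ∃ C : ℝ, ∀ k i, ‖u k i‖ ≤ C

/-- `‖u‖_∞ = sup_k |u(k)|_∞`. -/
def inputNorm {G : ℕ → Type*} [∀ i, NormedAddCommGroup (G i)] (u : ℕ → ∀ i, G i) : ℝ :=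
  ⨆ k, supNorm (u k)

/-- The set `A = X ∩ ∏_i A_i`. -/
def setA (A : ∀ i, Set (E i)) : Set (∀ i, E i) :=
  {y | Bdd y ∧ ∀ i, y i ∈ A i}

/-- The distance `|x|_A = inf_{y ∈ A} |x − y|_∞` from `x` to a set `A ⊆ X`. -/
def distA (x : ∀ i, E i) (A : Set (∀ i, E i)) : ℝ :=
  sInf ((fun y => supNorm (x - y)) '' A)

variable (I : ℕ → Finset ℕ)

/-- The network map `f(x,u) = (f_i(x_i, x̄_i, u_i))_{i∈ℕ}`. -/
def netF (f : ∀ i, E i → ((j : I i) → E j.1) → P i → E i)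
    (x : ∀ i, E i) (u : ∀ i, P i) : ∀ i, E i :=
  fun i => f i (x i) (fun j => x j.1) (u i)

/-- Solution of the discrete-time system `x⁺ = F(x,u)` in the extended state space. -/
def traj (F : (∀ i, E i) → (∀ i, P i) → ∀ i, E i)
    (ξ : ∀ i, E i) (u : ℕ → ∀ i, P i) : ℕ → ∀ i, E i
  | 0 => ξ
  | k + 1 => F (traj F ξ u k) (u k)

/-- Uniform `K`-boundedness of the subsystems with respect to uniformly bounded sets
`A_i` implies well-posedness of the network. -/
theorem stmt11
    [∀ i, NormedSpace ℝ (E i)] [∀ i, FiniteDimensional ℝ (E i)] [∀ i, Nontrivial (E i)]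
    [∀ i, NormedSpace ℝ (P i)] [∀ i, FiniteDimensional ℝ (P i)] [∀ i, Nontrivial (P i)]
    (hself : ∀ i, i ∉ I i)
    (hloc : ∀ i, {j | i ∈ I j}.Finite)
    (f : ∀ i, E i → ((j : I i) → E j.1) → P i → E i)
    (hf : ∀ i, Continuous fun q : E i × ((j : I i) → E j.1) × P i => f i q.1 q.2.1 q.2.2)
    (A : ∀ i, Set (E i)) (hne : ∀ i, (A i).Nonempty) (hcl : ∀ i, IsClosed (A i))
    (hub : ∃ C : ℝ, 0 < C ∧ ∀ i, ∀ a ∈ A i, ‖a‖ ≤ C)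
    (κ₁ κ₂ : ℝ → ℝ) (hκ₁ : ClassKinf κ₁) (hκ₂ : ClassKinf κ₂)
    (hKb :
      (∀ (i : ℕ) (ξi : E i) (ξb : (j : I i) → E j.1) (μi : P i),
          Metric.infDist (f i ξi ξb μi) (A i) ≤
            κ₁ (Metric.infDist ξi (A i)) + κ₂ ‖ξb‖ + κ₂ ‖μi‖) ∨
      (∀ (i : ℕ) (ξi : E i) (ξb : (j : I i) → E j.1) (μi : P i),
          Metric.infDist (f i ξi ξb μi) (A i) ≤
            κ₁ (Metric.infDist ξi (A i)) +
              κ₂ (⨆ j : I i, Metric.infDist (ξb j) (A j.1)) + κ₂ ‖μi‖)) :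
    ∀ (x : ∀ i, E i) (u : ∀ i, P i), Bdd x → Bdd u → Bdd (netF I f x u) := by
  rintro x u ⟨Cx, hx⟩ ⟨Cu, hu⟩
  obtain ⟨C, hC, hA⟩ := hub
  have hCx : 0 ≤ Cx := (norm_nonneg _).trans (hx 0)
  have hCu : 0 ≤ Cu := (norm_nonneg _).trans (hu 0)
  have m1 : ∀ s t : ℝ, 0 ≤ s → s ≤ t → κ₁ s ≤ κ₁ t := fun s t hs hst =>
    hκ₁.1.2.1.monotoneOn hs (hs.trans hst) hst
  have m2 : ∀ s t : ℝ, 0 ≤ s → s ≤ t → κ₂ s ≤ κ₂ t := fun s t hs hst =>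
    hκ₂.1.2.1.monotoneOn hs (hs.trans hst) hst
  have hd : ∀ i, Metric.infDist (x i) (A i) ≤ Cx + C := by
    intro i
    obtain ⟨a, ha⟩ := hne i
    refine (Metric.infDist_le_dist_of_mem ha).trans ?_
    rw [dist_eq_norm]
    exact (norm_sub_le _ _).trans (add_le_add (hx i) (hA i a ha))
  have key : ∀ i, Metric.infDist (netF I f x u i) (A i) ≤
      κ₁ (Cx + C) + κ₂ (Cx + C) + κ₂ Cu := by
    intro i
    have h1 := m1 _ _ Metric.infDist_nonneg (hd i)
    have h3 := m2 _ _ (norm_nonneg _) (hu i)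
    rcases hKb with h | h
    · have h0 := h i (x i) (fun j => x j.1) (u i)
      have h2 : κ₂ ‖(fun j : I i => x j.1)‖ ≤ κ₂ (Cx + C) := by
        refine m2 _ _ (norm_nonneg _) ?_
        refine (pi_norm_le_iff_of_nonneg (by linarith)).2 fun j => ?_
        have := hx j.1
        linarith
      unfold netF
      linarith
    · have h0 := h i (x i) (fun j => x j.1) (u i)
      have h2 : κ₂ (⨆ j : I i, Metric.infDist (x j.1) (A j.1)) ≤ κ₂ (Cx + C) := by
        refine m2 _ _ (Real.iSup_nonneg fun j => Metric.infDist_nonneg) ?_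
        exact Real.iSup_le (fun j => hd j.1) (by linarith)
      unfold netF
      linarith
  refine ⟨κ₁ (Cx + C) + κ₂ (Cx + C) + κ₂ Cu + 1 + C, fun i => ?_⟩
  obtain ⟨a, ha, hlt⟩ := (Metric.infDist_lt_iff (hne i)).1
    (lt_of_le_of_lt (key i) (lt_add_one _))
  rw [dist_eq_norm] at hlt
  have h4 := norm_le_norm_sub_add (netF I f x u i) a
  have h5 := hA i a ha
  linarith

end Network
end
end

section
/- Suppose the subsystems satisfy the standing structural assumptions (finite neighborhoods and continuous f_i), the family (A_i)_{i∈ℕ} of nonempty closed sets is uniformly bounded, and for some M ∈ ℕ the Lyapunov-type assumptions and the uniformity assumptions hold. Then the M-iterate Σ^M is well-posed: for every ξ ∈ X and every admissible input u, x(M,ξ,u) ∈ X, and consequently x(kM,ξ,u) ∈ X for all k ∈ ℕ. -/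
noncomputable section

section Network

variable {E : ℕ → Type*} [∀ i, NormedAddCommGroup (E i)]
variable {P : ℕ → Type*} [∀ i, NormedAddCommGroup (P i)]

variable (I : ℕ → Finset ℕ)

theorem traj_add_aux (F : (∀ i, E i) → (∀ i, P i) → ∀ i, E i)
    (ξ : ∀ i, E i) (u : ℕ → ∀ i, P i) (m n : ℕ) :
    traj F ξ u (m + n) = traj F (traj F ξ u m) (fun k => u (m + k)) n := by
  induction n with
  | zero => rfl
  | succ n ih =>
    change F (traj F ξ u (m + n)) (u (m + n)) = _
    rw [ih]
    rfl

/-- Under the Lyapunov-type and uniformity assumptions and uniform boundedness of the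
sets `A_i`, the `M`-iterate `Σ^M` is well-posed. -/
theorem stmt12
    [∀ i, NormedSpace ℝ (E i)] [∀ i, FiniteDimensional ℝ (E i)] [∀ i, Nontrivial (E i)]
    [∀ i, NormedSpace ℝ (P i)] [∀ i, FiniteDimensional ℝ (P i)] [∀ i, Nontrivial (P i)]
    (hself : ∀ i, i ∉ I i)
    (hloc : ∀ i, {j | i ∈ I j}.Finite)
    (f : ∀ i, E i → ((j : I i) → E j.1) → P i → E i)
    (hf : ∀ i, Continuous fun q : E i × ((j : I i) → E j.1) × P i => f i q.1 q.2.1 q.2.2)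
    (A : ∀ i, Set (E i)) (hne : ∀ i, (A i).Nonempty) (hcl : ∀ i, IsClosed (A i))
    (hub : ∃ C : ℝ, 0 < C ∧ ∀ i, ∀ a ∈ A i, ‖a‖ ≤ C)
    (M : ℕ) (hM : 0 < M)
    -- Lyapunov-type assumptions
    (W : ∀ i, E i → ℝ) (hWcont : ∀ i, Continuous (W i)) (hWnn : ∀ i ξi, 0 ≤ W i ξi)
    (ωl ωu : ℕ → ℝ → ℝ) (hωl : ∀ i, ClassKinf (ωl i)) (hωu : ∀ i, ClassKinf (ωu i))
    (hsandwich : ∀ (i : ℕ) (ξi : E i),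
      ωl i (Metric.infDist ξi (A i)) ≤ W i ξi ∧ W i ξi ≤ ωu i (Metric.infDist ξi (A i)))
    (γij : ℕ → ℕ → ℝ → ℝ)
    (hγij : ∀ i j, ClassKinf (γij i j) ∨ γij i j = fun _ => 0)
    (γiu : ℕ → ℝ → ℝ) (hγiu : ∀ i, ClassK (γiu i))
    (hdecay : ∀ (ξ : ∀ i, E i), Bdd ξ → ∀ u : ℕ → ∀ i, P i, AdmInput u →
      ∀ i, W i (traj (netF I f) ξ u M i) ≤
        max (⨆ j, γij i j (W j (ξ j))) (γiu i (inputNorm u)))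
    -- Uniformity assumptions
    (ωlb ωub : ℝ → ℝ) (hωlb : ClassKinf ωlb) (hωub : ClassKinf ωub)
    (hunifω : ∀ (i : ℕ) (s : ℝ), 0 ≤ s →
      ωlb s ≤ ωl i s ∧ ωl i s ≤ ωu i s ∧ ωu i s ≤ ωub s)
    (α : ℝ → ℝ) (hα : ClassKinf α) (hαid : ∀ s : ℝ, 0 < s → α s < s)
    (hunifγ : ∀ (i j : ℕ) (s : ℝ), 0 ≤ s → γij i j s ≤ α s)
    (γu : ℝ → ℝ) (hγu : ClassK γu)
    (hunifγu : ∀ (i : ℕ) (s : ℝ), 0 ≤ s → γiu i s ≤ γu s) :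
    ∀ (ξ : ∀ i, E i), Bdd ξ → ∀ u : ℕ → ∀ i, P i, AdmInput u →
      ∀ k : ℕ, Bdd (traj (netF I f) ξ u (k * M)) := by
  obtain ⟨C, hC0, hC⟩ := hub
  have key : ∀ (ξ : ∀ i, E i), Bdd ξ → ∀ u : ℕ → ∀ i, P i, AdmInput u →
      Bdd (traj (netF I f) ξ u M) := by
    intro ξ hξ u hu
    obtain ⟨D, hD⟩ := hξ
    have hD0 : 0 ≤ D := (norm_nonneg _).trans (hD 0)
    have hW : ∀ j, W j (ξ j) ≤ ωub (D + C) := by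
      intro j
      obtain ⟨a, ha⟩ := hne j
      have h1 : Metric.infDist (ξ j) (A j) ≤ D + C := by
        refine (Metric.infDist_le_dist_of_mem ha).trans ?_
        rw [dist_eq_norm]
        exact (norm_sub_le _ _).trans (add_le_add (hD j) (hC j a ha))
      have h0 : 0 ≤ Metric.infDist (ξ j) (A j) := Metric.infDist_nonneg
      refine ((hsandwich j (ξ j)).2.trans (hunifω j _ h0).2.2).trans ?_
      exact hωub.1.2.1.monotoneOn h0 (h0.trans h1) h1
    have hin : 0 ≤ inputNorm u :=
      Real.iSup_nonneg fun k => Real.iSup_nonneg fun i => norm_nonneg _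
    obtain ⟨s, hs0, hs⟩ := hωlb.2 (max (α (ωub (D + C))) (γu (inputNorm u)))
    refine ⟨s + 1 + C, fun i => ?_⟩
    have hWi : W i (traj (netF I f) ξ u M i) ≤
        max (α (ωub (D + C))) (γu (inputNorm u)) := by
      refine (hdecay ξ ⟨D, hD⟩ u hu i).trans (max_le_max ?_ (hunifγu i _ hin))
      refine ciSup_le fun j => (hunifγ i j _ (hWnn j _)).trans ?_
      exact hα.1.2.1.monotoneOn (hWnn j _) ((hWnn j _).trans (hW j)) (hW j)
    have h0 : 0 ≤ Metric.infDist (traj (netF I f) ξ u M i) (A i) := Metric.infDist_nonneg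
    have h2 : ωlb (Metric.infDist (traj (netF I f) ξ u M i) (A i)) < ωlb s :=
      (((hunifω i _ h0).1.trans (hsandwich i _).1).trans hWi).trans_lt hs
    have h3 := (hωlb.1.2.1.lt_iff_lt h0 hs0).1 h2
    obtain ⟨a, ha, had⟩ := (Metric.infDist_lt_iff (hne i)).1 h3
    rw [dist_eq_norm] at had
    have h4 := norm_le_norm_sub_add (traj (netF I f) ξ u M i) a
    have h5 := hC i a ha
    linarith
  intro ξ hξ u hu k
  induction k with
  | zero => simpa [traj] using hξ
  | succ k ih =>
    rw [Nat.succ_mul, traj_add_aux]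
    obtain ⟨D, hD⟩ := hu
    exact key _ ih _ ⟨D, fun n i => hD _ i⟩

end Network
end
end

section
/- Consider a well-posed infinite network Σ with nonempty closed sets A_i ⊆ ℝ^{n_i}, let A = X ∩ ∏_{i∈ℕ} A_i be nonempty, and suppose the Lyapunov-type assumptions and the uniformity assumptions hold for some M ∈ ℕ. Then the function V(ξ) := sup_{i∈ℕ} W_i(ξ_i) is finite for every ξ ∈ X and satisfies: (i) V(x(M,ξ,u)) ≤ max{α(V(ξ)), γ̄_u(‖u‖_∞)} for all ξ ∈ X and all admissible inputs u, and (ii) ω̲(|ξ|_A) ≤ V(ξ) ≤ ω̄(|ξ|_A) for all ξ ∈ X. -/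
noncomputable section

section Network

variable {E : ℕ → Type*} [∀ i, NormedAddCommGroup (E i)]
variable {P : ℕ → Type*} [∀ i, NormedAddCommGroup (P i)]

variable (I : ℕ → Finset ℕ)

/-- Small-gain construction: `V(ξ) = sup_i W_i(ξ_i)` is a finite, coercive
`M`-step ISS Lyapunov function for the infinite network. -/
theorem stmt13
    [∀ i, NormedSpace ℝ (E i)] [∀ i, FiniteDimensional ℝ (E i)] [∀ i, Nontrivial (E i)]
    [∀ i, NormedSpace ℝ (P i)] [∀ i, FiniteDimensional ℝ (P i)] [∀ i, Nontrivial (P i)]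
    (hself : ∀ i, i ∉ I i)
    (hloc : ∀ i, {j | i ∈ I j}.Finite)
    (f : ∀ i, E i → ((j : I i) → E j.1) → P i → E i)
    (hf : ∀ i, Continuous fun q : E i × ((j : I i) → E j.1) × P i => f i q.1 q.2.1 q.2.2)
    (hwp : ∀ (x : ∀ i, E i) (u : ∀ i, P i), Bdd x → Bdd u → Bdd (netF I f x u))
    (A : ∀ i, Set (E i)) (hne : ∀ i, (A i).Nonempty) (hcl : ∀ i, IsClosed (A i))
    (hAne : (setA A).Nonempty)
    (M : ℕ) (hM : 0 < M)
    -- Lyapunov-type assumptions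
    (W : ∀ i, E i → ℝ) (hWcont : ∀ i, Continuous (W i)) (hWnn : ∀ i ξi, 0 ≤ W i ξi)
    (ωl ωu : ℕ → ℝ → ℝ) (hωl : ∀ i, ClassKinf (ωl i)) (hωu : ∀ i, ClassKinf (ωu i))
    (hsandwich : ∀ (i : ℕ) (ξi : E i),
      ωl i (Metric.infDist ξi (A i)) ≤ W i ξi ∧ W i ξi ≤ ωu i (Metric.infDist ξi (A i)))
    (γij : ℕ → ℕ → ℝ → ℝ)
    (hγij : ∀ i j, ClassKinf (γij i j) ∨ γij i j = fun _ => 0)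
    (γiu : ℕ → ℝ → ℝ) (hγiu : ∀ i, ClassK (γiu i))
    (hdecay : ∀ (ξ : ∀ i, E i), Bdd ξ → ∀ u : ℕ → ∀ i, P i, AdmInput u →
      ∀ i, W i (traj (netF I f) ξ u M i) ≤
        max (⨆ j, γij i j (W j (ξ j))) (γiu i (inputNorm u)))
    -- Uniformity assumptions
    (ωlb ωub : ℝ → ℝ) (hωlb : ClassKinf ωlb) (hωub : ClassKinf ωub)
    (hunifω : ∀ (i : ℕ) (s : ℝ), 0 ≤ s →
      ωlb s ≤ ωl i s ∧ ωl i s ≤ ωu i s ∧ ωu i s ≤ ωub s)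
    (α : ℝ → ℝ) (hα : ClassKinf α) (hαid : ∀ s : ℝ, 0 < s → α s < s)
    (hunifγ : ∀ (i j : ℕ) (s : ℝ), 0 ≤ s → γij i j s ≤ α s)
    (γu : ℝ → ℝ) (hγu : ClassK γu)
    (hunifγu : ∀ (i : ℕ) (s : ℝ), 0 ≤ s → γiu i s ≤ γu s)
    :
    ∀ (ξ : ∀ i, E i), Bdd ξ →
      (BddAbove (Set.range fun i => W i (ξ i)) ∧
        ωlb (distA ξ (setA A)) ≤ (⨆ i, W i (ξ i)) ∧
        (⨆ i, W i (ξ i)) ≤ ωub (distA ξ (setA A))) ∧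
      ∀ u : ℕ → ∀ i, P i, AdmInput u →
        (⨆ i, W i (traj (netF I f) ξ u M i)) ≤
          max (α (⨆ i, W i (ξ i))) (γu (inputNorm u)) := by
  intro ξ hξ
  have hD0 : ∀ i, Metric.infDist (ξ i) (A i) ≤ distA ξ (setA A) := by
    intro i
    refine le_csInf (hAne.image _) ?_
    rintro _ ⟨y, ⟨⟨C, hC⟩, hy⟩, rfl⟩
    obtain ⟨C', hC'⟩ := hξ
    refine (Metric.infDist_le_dist_of_mem (hy i)).trans ?_
    rw [dist_eq_norm]
    refine le_ciSup (f := fun i => ‖(ξ - y) i‖) ⟨C' + C, ?_⟩ i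
    rintro _ ⟨j, rfl⟩
    exact (norm_sub_le _ _).trans (add_le_add (hC' j) (hC j))
  have hDc : ∀ c : ℝ, (∀ i, Metric.infDist (ξ i) (A i) ≤ c) → distA ξ (setA A) ≤ c := by
    intro c hc
    have hex : ∀ i, ∃ y ∈ A i, Metric.infDist (ξ i) (A i) = dist (ξ i) y := by
      intro i
      haveI : ProperSpace (E i) := FiniteDimensional.proper ℝ (E i)
      exact (hcl i).exists_infDist_eq_dist (hne i) (ξ i)
    choose y hyA hy using hex
    obtain ⟨C', hC'⟩ := hξ
    have hn : ∀ i, ‖ξ i - y i‖ ≤ c := fun i => by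
      rw [← dist_eq_norm, ← hy i]; exact hc i
    have hyb : Bdd y := ⟨C' + c, fun i => by
      have h1 : y i = ξ i - (ξ i - y i) := by abel
      rw [h1]
      exact (norm_sub_le _ _).trans (add_le_add (hC' i) (hn i))⟩
    have h2 : distA ξ (setA A) ≤ supNorm (ξ - y) := by
      refine csInf_le ⟨0, ?_⟩ ⟨y, ⟨hyb, hyA⟩, rfl⟩
      rintro _ ⟨z, -, rfl⟩
      exact Real.iSup_nonneg fun i => norm_nonneg _
    exact h2.trans (ciSup_le hn)
  have hi0 : ∀ i, 0 ≤ Metric.infDist (ξ i) (A i) := fun i => Metric.infDist_nonneg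
  have hDn : 0 ≤ distA ξ (setA A) := (hi0 0).trans (hD0 0)
  have hub : ∀ i, W i (ξ i) ≤ ωub (distA ξ (setA A)) := fun i =>
    ((hsandwich i (ξ i)).2.trans (hunifω i _ (hi0 i)).2.2).trans
      (hωub.1.2.1.monotoneOn (hi0 i) hDn (hD0 i))
  have hB : BddAbove (Set.range fun i => W i (ξ i)) :=
    ⟨_, by rintro _ ⟨i, rfl⟩; exact hub i⟩
  have hWV : ∀ i, W i (ξ i) ≤ ⨆ i, W i (ξ i) := fun i => le_ciSup hB i
  have hV0 : 0 ≤ ⨆ i, W i (ξ i) := (hWnn 0 (ξ 0)).trans (hWV 0)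
  refine ⟨⟨hB, ?_, ciSup_le hub⟩, ?_⟩
  · by_contra! hlt
    have hivt := intermediate_value_Icc hDn (hωlb.1.1.mono Set.Icc_subset_Ici_self)
    obtain ⟨s, hs, hsV⟩ := hivt ⟨by rw [hωlb.1.2.2]; exact hV0, hlt.le⟩
    have hDs : distA ξ (setA A) ≤ s := hDc s fun i => by
      refine (hωlb.1.2.1.le_iff_le (hi0 i) hs.1).1 ?_
      rw [hsV]
      exact ((hunifω i _ (hi0 i)).1.trans (hsandwich i (ξ i)).1).trans (hWV i)
    have : s = distA ξ (setA A) := le_antisymm hs.2 hDs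
    rw [this] at hsV
    exact hlt.ne' hsV
  · intro u hu
    refine ciSup_le fun i => (hdecay ξ hξ u hu i).trans (max_le_max ?_ ?_)
    · exact ciSup_le fun j => (hunifγ i j _ (hWnn j _)).trans
        (hα.1.2.1.monotoneOn (hWnn j _) hV0 (hWV j))
    · exact hunifγu i _ (Real.iSup_nonneg fun k => Real.iSup_nonneg fun i => norm_nonneg _)

end Network
end
end

section
/- Consider a well-posed infinite network Σ with nonempty closed sets A_i ⊆ ℝ^{n_i}, let A = X ∩ ∏_{i∈ℕ} A_i be nonempty, suppose the Lyapunov-type assumptions and the uniformity assumptions hold for some M ∈ ℕ, and assume in addition that f is K-bounded with respect to A. Then Σ is ISS with respect to A: there exist β of class KL and γ of class K such that |x(k,ξ,u)|_A ≤ max{β(|ξ|_A, k), γ(‖u‖_∞)} for all k ∈ ℕ₀, all ξ ∈ X and all admissible inputs u. -/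
noncomputable section

section Network

variable {E : ℕ → Type*} [∀ i, NormedAddCommGroup (E i)]
variable {P : ℕ → Type*} [∀ i, NormedAddCommGroup (P i)]

variable (I : ℕ → Finset ℕ)

theorem ClassK.nonneg' {γ : ℝ → ℝ} (h : ClassK γ) {s : ℝ} (hs : 0 ≤ s) : 0 ≤ γ s := by
  have := h.2.1.monotoneOn (Set.self_mem_Ici) (Set.mem_Ici.2 hs) hs
  rwa [h.2.2] at this

theorem ClassK.mono' {γ : ℝ → ℝ} (h : ClassK γ) {s t : ℝ} (hs : 0 ≤ s) (hst : s ≤ t) :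
    γ s ≤ γ t :=
  h.2.1.monotoneOn (Set.mem_Ici.2 hs) (Set.mem_Ici.2 (hs.trans hst)) hst

theorem ClassK.max_le' {γ : ℝ → ℝ} (h : ClassK γ) {s a b : ℝ} (hs : 0 ≤ s) (ha : 0 ≤ a)
    (hb : 0 ≤ b) (hst : s ≤ max a b) : γ s ≤ max (γ a) (γ b) := by
  rcases le_total a b with hab | hab
  · rw [max_eq_right hab] at hst
    exact (h.mono' hs hst).trans (le_max_right _ _)
  · rw [max_eq_left hab] at hst
    exact (h.mono' hs hst).trans (le_max_left _ _)

theorem ClassK.comp' {γ δ : ℝ → ℝ} (h : ClassK γ) (k : ClassK δ) :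
    ClassK (fun s => γ (δ s)) := by
  have hm : Set.MapsTo δ (Set.Ici 0) (Set.Ici 0) := fun s hs => k.nonneg' hs
  refine ⟨h.1.comp k.1 hm, h.2.1.comp k.2.1 hm, ?_⟩
  simp [k.2.2, h.2.2]

theorem ClassK.add' {γ δ : ℝ → ℝ} (h : ClassK γ) (k : ClassK δ) :
    ClassK (fun s => γ s + δ s) := by
  refine ⟨h.1.add k.1, h.2.1.add k.2.1, ?_⟩
  simp [k.2.2, h.2.2]

theorem classK_id' : ClassK (fun s => s) :=
  ⟨continuousOn_id, strictMono_id.strictMonoOn _, rfl⟩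

theorem ClassKinf.inv' {ω : ℝ → ℝ} (h : ClassKinf ω) :
    ∃ g : ℝ → ℝ, ClassK g ∧ ∀ x, 0 ≤ x → g (ω x) = x := by
  obtain ⟨hK, hu⟩ := h
  let F : Set.Ici (0:ℝ) → Set.Ici (0:ℝ) := fun x => ⟨ω x, hK.nonneg' x.2⟩
  have hF : StrictMono F := fun x y hxy => hK.2.1 x.2 y.2 hxy
  have hs : Function.Surjective F := by
    rintro ⟨y, hy⟩
    obtain ⟨s, hs, hys⟩ := hu y
    have := intermediate_value_Icc hs (hK.1.mono (Set.Icc_subset_Ici_self))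
    have hy' : y ∈ Set.Icc (ω 0) (ω s) := ⟨by rw [hK.2.2]; exact hy, hys.le⟩
    obtain ⟨x, hx, hxy⟩ := this hy'
    exact ⟨⟨x, hx.1⟩, Subtype.ext hxy⟩
  let e := hF.orderIsoOfSurjective F hs
  have he : ∀ x, e x = F x := fun x => rfl
  let g : ℝ → ℝ := fun y => (e.symm ⟨max y 0, Set.mem_Ici.2 (le_max_right _ _)⟩ : Set.Ici (0:ℝ))
  have hg : ∀ x, 0 ≤ x → g (ω x) = x := by
    intro x hx
    have : (⟨max (ω x) 0, Set.mem_Ici.2 (le_max_right _ _)⟩ : Set.Ici (0:ℝ)) = e ⟨x, hx⟩ := by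
      apply Subtype.ext
      simp [he, F, hK.nonneg' hx]
    simp only [g, this, OrderIso.symm_apply_apply]
  refine ⟨g, ⟨?_, ?_, ?_⟩, hg⟩
  · apply Continuous.continuousOn
    exact continuous_subtype_val.comp (e.symm.continuous.comp
      ((continuous_id.max continuous_const).subtype_mk _))
  · intro x hx y hy hxy
    simp only [g]
    apply e.symm.strictMono
    show max x 0 < max y 0
    rw [max_eq_left hx, max_eq_left hy]; exact hxy
  · have := hg 0 le_rfl
    rwa [hK.2.2] at this

section Iter
variable {α : ℝ → ℝ}

theorem iter_nonneg' (hα : ClassK α) (n : ℕ) {s : ℝ} (hs : 0 ≤ s) : 0 ≤ α^[n] s := by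
  induction n with
  | zero => exact hs
  | succ n ih => rw [Function.iterate_succ_apply']; exact hα.nonneg' ih

theorem iter_classK' (hα : ClassK α) (n : ℕ) : ClassK (α^[n]) := by
  induction n with
  | zero => exact classK_id'
  | succ n ih => rw [Function.iterate_succ']; exact hα.comp' ih

theorem le_self' (hα : ClassK α) (hid : ∀ s : ℝ, 0 < s → α s < s) {s : ℝ} (hs : 0 ≤ s) :
    α s ≤ s := by
  rcases hs.eq_or_lt with h | h
  · rw [← h, hα.2.2]
  · exact (hid s h).le

theorem iter_anti' (hα : ClassK α) (hid : ∀ s : ℝ, 0 < s → α s < s) {s : ℝ} (hs : 0 ≤ s) :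
    Antitone (fun n => α^[n] s) := by
  apply antitone_nat_of_succ_le
  intro n
  simp only [Function.iterate_succ_apply']
  exact le_self' hα hid (iter_nonneg' hα n hs)

theorem iter_tendsto' (hα : ClassK α) (hid : ∀ s : ℝ, 0 < s → α s < s) {s : ℝ} (hs : 0 ≤ s) :
    Filter.Tendsto (fun n => α^[n] s) Filter.atTop (nhds 0) := by
  have hb : BddBelow (Set.range fun n => α^[n] s) :=
    ⟨0, by rintro _ ⟨n, rfl⟩; exact iter_nonneg' hα n hs⟩
  have ht := tendsto_atTop_ciInf (iter_anti' hα hid hs) hb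
  set l := ⨅ n, α^[n] s
  have hl : 0 ≤ l := le_ciInf fun n => iter_nonneg' hα n hs
  have h2 : Filter.Tendsto (fun n => α (α^[n] s)) Filter.atTop (nhds (α l)) := by
    have hc : ContinuousWithinAt α (Set.Ici 0) l := hα.1 l hl
    refine hc.tendsto.comp (tendsto_nhdsWithin_iff.2 ⟨ht, ?_⟩)
    exact Filter.Eventually.of_forall fun n => iter_nonneg' hα n hs
  have h3 := (Filter.tendsto_add_atTop_iff_nat 1).2 ht
  simp only [Function.iterate_succ_apply'] at h3
  have h4 := tendsto_nhds_unique h2 h3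
  have : l = 0 := by
    by_contra hne
    have := hid l (lt_of_le_of_ne hl (Ne.symm hne))
    linarith
  rwa [this] at ht

/-- clamp -/
def clampQ (x : ℝ) : ℝ := max 0 (min 1 x)

theorem clampQ_nonneg (x : ℝ) : 0 ≤ clampQ x := le_max_left _ _
theorem clampQ_le (x : ℝ) : clampQ x ≤ 1 := max_le zero_le_one (min_le_left _ _)
theorem clampQ_mono : Monotone clampQ := fun _ _ h => max_le_max le_rfl (min_le_min le_rfl h)
theorem clampQ_cont : Continuous clampQ := by unfold clampQ; fun_prop
theorem clampQ_one {x : ℝ} (h : 1 ≤ x) : clampQ x = 1 := by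
  unfold clampQ; rw [min_eq_left h]; norm_num
theorem clampQ_zero {x : ℝ} (h : x ≤ 0) : clampQ x = 0 := by
  unfold clampQ; rw [min_eq_right (by linarith)]; exact max_eq_left h

/-- finite max -/
def BB (α : ℝ → ℝ) : ℕ → ℝ → ℝ → ℝ
  | 0, s, t => s * clampQ (1 - t)
  | n + 1, s, t => max (BB α n s t) (α^[n+1] s * clampQ ((n:ℝ) + 2 - t))

theorem BB_ge (n : ℕ) (s t : ℝ) : α^[n] s * clampQ ((n:ℝ) + 1 - t) ≤ BB α n s t := by
  cases n with
  | zero => simp [BB]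
  | succ n =>
    simp only [BB]
    refine le_trans (le_of_eq ?_) (le_max_right _ _)
    push_cast; ring_nf

theorem BB_stab (hα : ClassK α) (hid : ∀ s : ℝ, 0 < s → α s < s) {s t : ℝ} (hs : 0 ≤ s)
    {n N : ℕ} (hn : t ≤ n) (hN : n ≤ N) : BB α N s t = BB α n s t := by
  induction N, hN using Nat.le_induction with
  | base => rfl
  | succ m hm ih =>
    rw [← ih]
    simp only [BB]
    apply max_eq_left
    refine le_trans ?_ (BB_ge m s t)
    have hm' : (n:ℝ) ≤ m := by exact_mod_cast hm
    rw [clampQ_one (by linarith), clampQ_one (by linarith), mul_one, mul_one]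
    exact iter_anti' hα hid hs (Nat.le_succ m)

theorem BB_cont (hα : ClassK α) (n : ℕ) :
    ContinuousOn (fun p : ℝ × ℝ => BB α n p.1 p.2) (Set.Ici 0 ×ˢ Set.univ) := by
  have hm : Set.MapsTo Prod.fst (Set.Ici (0:ℝ) ×ˢ (Set.univ : Set ℝ)) (Set.Ici 0) :=
    fun p hp => hp.1
  induction n with
  | zero =>
    simp only [BB]
    exact continuousOn_fst.mul (clampQ_cont.comp (by fun_prop)).continuousOn
  | succ n ih =>
    simp only [BB]
    refine ContinuousOn.sup ih (ContinuousOn.mul ?_ (clampQ_cont.comp (by fun_prop)).continuousOn)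
    exact (iter_classK' hα (n+1)).1.comp continuousOn_fst hm

theorem BB_mono (hα : ClassK α) (n : ℕ) {s s' : ℝ} (hs : 0 ≤ s) (h : s ≤ s') (t : ℝ) :
    BB α n s t ≤ BB α n s' t := by
  induction n with
  | zero => exact mul_le_mul_of_nonneg_right h (clampQ_nonneg _)
  | succ n ih =>
    exact max_le_max ih (mul_le_mul_of_nonneg_right ((iter_classK' hα (n+1)).mono' hs h)
      (clampQ_nonneg _))

theorem BB_anti (hα : ClassK α) (n : ℕ) {s : ℝ} (hs : 0 ≤ s) {t t' : ℝ} (h : t ≤ t') :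
    BB α n s t' ≤ BB α n s t := by
  induction n with
  | zero => exact mul_le_mul_of_nonneg_left (clampQ_mono (by linarith)) hs
  | succ n ih =>
    exact max_le_max ih (mul_le_mul_of_nonneg_left (clampQ_mono (by linarith))
      (iter_nonneg' hα (n+1) hs))

theorem BB_zero (hα : ClassK α) (n : ℕ) (t : ℝ) : BB α n 0 t = 0 := by
  induction n with
  | zero => simp [BB]
  | succ n ih => simp only [BB]; rw [ih, (iter_classK' hα (n+1)).2.2]; simp

theorem BB_le (hα : ClassK α) (hid : ∀ s : ℝ, 0 < s → α s < s) {s t : ℝ} (hs : 0 ≤ s)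
    {m : ℕ} (hm : (m:ℝ) ≤ t) (n : ℕ) : BB α n s t ≤ α^[m] s := by
  have key : ∀ k : ℕ, α^[k] s * clampQ ((k:ℝ) + 1 - t) ≤ α^[m] s := by
    intro k
    rcases lt_or_ge k m with h | h
    · have : (k:ℝ) + 1 ≤ m := by exact_mod_cast h
      rw [clampQ_zero (by linarith), mul_zero]
      exact iter_nonneg' hα m hs
    · refine le_trans ?_ (iter_anti' hα hid hs h)
      exact mul_le_of_le_one_right (iter_nonneg' hα k hs) (clampQ_le _)
  induction n with
  | zero => simpa [BB] using key 0
  | succ n ih =>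
    simp only [BB]
    refine max_le ih ?_
    have := key (n+1)
    push_cast at this
    rwa [show (n:ℝ) + 1 + 1 - t = n + 2 - t by ring] at this

theorem exists_b (hα : ClassK α) (hid : ∀ s : ℝ, 0 < s → α s < s) :
    ∃ b : ℝ → ℝ → ℝ, ContinuousOn (fun p : ℝ × ℝ => b p.1 p.2) (Set.Ici 0 ×ˢ Set.univ) ∧
      (∀ s s' t, 0 ≤ s → s ≤ s' → b s t ≤ b s' t) ∧
      (∀ s t t', 0 ≤ s → t ≤ t' → b s t' ≤ b s t) ∧
      (∀ s, 0 ≤ s → Filter.Tendsto (b s) Filter.atTop (nhds 0)) ∧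
      (∀ t, b 0 t = 0) ∧ (∀ s, 0 ≤ s → ∀ n : ℕ, α^[n] s ≤ b s n) := by
  have hst : ∀ (s t : ℝ) (N : ℕ), 0 ≤ s → t ≤ N → BB α ⌈t⌉₊ s t = BB α N s t := by
    intro s t N hs hN
    exact (BB_stab hα hid hs (Nat.le_ceil t) (Nat.ceil_le.2 hN)).symm
  refine ⟨fun s t => BB α ⌈t⌉₊ s t, ?_, ?_, ?_, ?_, ?_, ?_⟩
  · rintro ⟨s, t⟩ ⟨hs, -⟩
    obtain ⟨N, hN⟩ := exists_nat_gt t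
    refine ((BB_cont hα N) (s, t) ⟨hs, trivial⟩).congr_of_eventuallyEq ?_ (hst s t N hs hN.le)
    have h1 : ∀ᶠ p : ℝ × ℝ in nhds (s, t), p.2 < N :=
      (continuous_snd.tendsto (s, t)).eventually (gt_mem_nhds hN)
    filter_upwards [nhdsWithin_le_nhds h1, self_mem_nhdsWithin] with p hp hp'
    exact hst p.1 p.2 N hp'.1 hp.le
  · intro s s' t hs h
    exact BB_mono hα _ hs h t
  · intro s t t' hs h
    show BB α ⌈t'⌉₊ s t' ≤ BB α ⌈t⌉₊ s t
    rw [hst s t ⌈t'⌉₊ hs (h.trans (Nat.le_ceil _))]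
    exact BB_anti hα _ hs h
  · intro s hs
    have h1 : Filter.Tendsto (fun t : ℝ => α^[⌊t⌋₊] s) Filter.atTop (nhds 0) :=
      (iter_tendsto' hα hid hs).comp tendsto_nat_floor_atTop
    refine tendsto_of_tendsto_of_tendsto_of_le_of_le' tendsto_const_nhds h1 ?_ ?_
    · refine Filter.Eventually.of_forall fun t => ?_
      have := BB_mono hα ⌈t⌉₊ le_rfl hs t
      rwa [BB_zero hα] at this
    · filter_upwards [Filter.eventually_ge_atTop 0] with t ht
      exact BB_le hα hid hs (Nat.floor_le ht) _
  · intro t; exact BB_zero hα _ t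
  · intro s hs n
    have := BB_ge (α := α) n s n
    rw [clampQ_one (by linarith), mul_one] at this
    simpa using this

theorem exists_KL (hα : ClassK α) (hid : ∀ s : ℝ, 0 < s → α s < s) {g h : ℝ → ℝ}
    (hg : ClassK g) (hh : ClassK h) {M : ℕ} (hM : 0 < M) :
    ∃ β : ℝ → ℝ → ℝ, ClassKL β ∧
      ∀ s, 0 ≤ s → ∀ k : ℕ, g (α^[k / M] (h s)) ≤ β s k := by
  obtain ⟨b, bc, bm, ba, bt, b0, bi⟩ := exists_b hα hid
  have hM' : (0:ℝ) < M := by exact_mod_cast hM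
  have bnn : ∀ s t, 0 ≤ s → 0 ≤ b s t := fun s t hs => by
    have := bm 0 s t le_rfl hs
    rwa [b0] at this
  have inn : ∀ s t : ℝ, 0 ≤ s → 0 ≤ b (h s) (t / M - 1) + s * Real.exp (-t) := fun s t hs =>
    add_nonneg (bnn _ _ (hh.nonneg' hs)) (mul_nonneg hs (Real.exp_pos _).le)
  have hc : ContinuousOn
      (fun p : ℝ × ℝ => g (b (h p.1) (p.2 / M - 1) + p.1 * Real.exp (-p.2)))
      (Set.Ici 0 ×ˢ Set.Ici 0) := by
    refine hg.1.comp ?_ (fun p hp => inn p.1 p.2 hp.1)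
    refine ContinuousOn.add ?_ (Continuous.continuousOn (by fun_prop))
    refine bc.comp (f := fun p : ℝ × ℝ => (h p.1, p.2 / M - 1)) (ContinuousOn.prodMk ?_ (Continuous.continuousOn (by fun_prop)))
      (fun p hp => ⟨hh.nonneg' hp.1, trivial⟩)
    exact hh.1.comp continuousOn_fst (fun p hp => hp.1)
  refine ⟨fun s t => g (b (h s) (t / M - 1) + s * Real.exp (-t)), ⟨hc, ?_, ?_⟩, ?_⟩
  · intro t ht
    refine ⟨?_, ?_, ?_⟩
    · exact hc.comp (f := fun r : ℝ => (r, t)) (Continuous.continuousOn (by fun_prop))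
        (fun r hr => ⟨hr, ht⟩)
    · intro r hr r' hr' hrr
      refine hg.2.1 (inn r t hr) (inn r' t hr') ?_
      have := bm (h r) (h r') (t / M - 1) (hh.nonneg' hr) (hh.mono' hr hrr.le)
      have := mul_lt_mul_of_pos_right hrr (Real.exp_pos (-t))
      show _ < _
      linarith
    · simp [hh.2.2, b0, hg.2.2]
  · intro r hr
    constructor
    · intro t ht t' ht' htt
      refine hg.2.1 (inn r t' hr.le) (inn r t hr.le) ?_
      have h1 := ba (h r) (t / M - 1) (t' / M - 1) (hh.nonneg' hr.le) (by gcongr)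
      have h2 := mul_lt_mul_of_pos_left (Real.exp_lt_exp.2 (neg_lt_neg htt)) hr
      show _ < _
      linarith
    · have h1 : Filter.Tendsto (fun t : ℝ => b (h r) (t / M - 1) + r * Real.exp (-t))
          Filter.atTop (nhds 0) := by
        have e1 : Filter.Tendsto (fun t : ℝ => t / M - 1) Filter.atTop Filter.atTop :=
          Filter.tendsto_atTop_add_const_right _ _ (Filter.tendsto_id.atTop_div_const hM')
        have e2 := (bt (h r) (hh.nonneg' hr.le)).comp e1
        have e3 := (Real.tendsto_exp_neg_atTop_nhds_zero).const_mul r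
        simpa using e2.add e3
      have h2 : Filter.Tendsto g (nhdsWithin 0 (Set.Ici 0)) (nhds (g 0)) :=
        hg.1 0 Set.self_mem_Ici
      rw [hg.2.2] at h2
      exact h2.comp (tendsto_nhdsWithin_iff.2
        ⟨h1, Filter.Eventually.of_forall fun t => inn r t hr.le⟩)
  · intro s hs k
    refine hg.mono' (iter_nonneg' hα _ (hh.nonneg' hs)) ?_
    have h1 := bi (h s) (hh.nonneg' hs) (k / M)
    have h2 : (k:ℝ) / M - 1 ≤ ((k / M : ℕ) : ℝ) := by
      have : k < M * (k / M + 1) := Nat.lt_mul_div_succ k hM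
      have h' : (k:ℝ) < M * (((k / M : ℕ) : ℝ) + 1) := by exact_mod_cast this
      rw [sub_le_iff_le_add, div_le_iff₀ hM']
      linarith
    have h3 := ba (h s) _ _ (hh.nonneg' hs) h2
    have h4 := mul_nonneg hs (Real.exp_pos (-(k:ℝ))).le
    linarith
end Iter

theorem kbound_iter {κ₁ κ₂ : ℝ → ℝ} (h1 : ClassK κ₁) (h2 : ClassK κ₂) (r : ℕ) :
    ∃ σ ρ : ℝ → ℝ, ClassK σ ∧ ClassK ρ ∧ ∀ (D : ℕ → ℝ) (t : ℝ), 0 ≤ t → (∀ k, 0 ≤ D k) →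
      (∀ k, D (k+1) ≤ κ₁ (D k) + κ₂ t) → ∀ k ≤ r, D k ≤ max (σ (D 0)) (ρ t) := by
  induction r with
  | zero =>
    refine ⟨_, _, classK_id', classK_id', ?_⟩
    intro D t ht hD hs k hk
    obtain rfl : k = 0 := by omega
    exact le_max_left _ _
  | succ r ih =>
    obtain ⟨σ, ρ, hσ, hρ, H⟩ := ih
    have c1 := h1.comp' hσ
    have c2 := (h1.comp' hρ).add' h2
    refine ⟨_, _, hσ.add' (c1.add' c1), hρ.add' (c2.add' c2), ?_⟩
    intro D t ht hD hs k hk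
    have p1 := c1.nonneg' (hD 0)
    have p2 := h2.nonneg' ht
    have p3 := (h1.comp' hρ).nonneg' ht
    have p4 := hσ.nonneg' (hD 0)
    have p5 := hρ.nonneg' ht
    rcases Nat.lt_or_ge k (r+1) with h | h
    · refine (H D t ht hD hs k (by omega)).trans (max_le_max ?_ ?_) <;> (try beta_reduce at *) <;> linarith
    · obtain rfl : k = r + 1 := by omega
      refine (hs r).trans ?_
      have q := h1.max_le' (hD r) p4 p5 (H D t ht hD hs r le_rfl)
      rcases le_total (κ₁ (σ (D 0))) (κ₁ (ρ t) + κ₂ t) with h' | h'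
      · refine le_trans ?_ (le_max_right _ _)
        rcases le_max_iff.1 q with q | q <;> (try beta_reduce at *) <;> linarith
      · refine le_trans ?_ (le_max_left _ _)
        rcases le_max_iff.1 q with q | q <;> (try beta_reduce at *) <;> linarith

theorem supNorm_nonneg' {G : ℕ → Type*} [∀ i, NormedAddCommGroup (G i)] (x : ∀ i, G i) :
    0 ≤ supNorm x := Real.iSup_nonneg fun _ => norm_nonneg _

theorem distA_nonneg' (x : ∀ i, E i) (A : Set (∀ i, E i)) : 0 ≤ distA x A := by
  apply Real.sInf_nonneg
  rintro _ ⟨y, -, rfl⟩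
  exact supNorm_nonneg' _

theorem infDist_le_distA {x : ∀ i, E i} (hx : Bdd x) {A : ∀ i, Set (E i)}
    (hA : (setA A).Nonempty) (i : ℕ) : Metric.infDist (x i) (A i) ≤ distA x (setA A) := by
  apply le_csInf (hA.image _)
  rintro _ ⟨y, ⟨⟨C, hC⟩, hyA⟩, rfl⟩
  obtain ⟨D, hD⟩ := hx
  have hb : BddAbove (Set.range fun i => ‖(x - y) i‖) := by
    refine ⟨D + C, ?_⟩
    rintro _ ⟨j, rfl⟩
    exact (norm_sub_le _ _).trans (add_le_add (hD j) (hC j))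
  refine (Metric.infDist_le_dist_of_mem (hyA i)).trans ?_
  rw [dist_eq_norm]
  exact le_ciSup hb i

theorem distA_le' {x : ∀ i, E i} (hx : Bdd x) {A : ∀ i, Set (E i)}
    [∀ i, NormedSpace ℝ (E i)] [∀ i, FiniteDimensional ℝ (E i)]
    (hcl : ∀ i, IsClosed (A i)) (hA : (setA A).Nonempty) {c : ℝ}
    (h : ∀ i, Metric.infDist (x i) (A i) ≤ c) : distA x (setA A) ≤ c := by
  obtain ⟨a, -, haA⟩ := hA
  have : ∀ i, ∃ y ∈ A i, Metric.infDist (x i) (A i) = dist (x i) y := by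
    intro i
    haveI := FiniteDimensional.proper ℝ (E i)
    exact (hcl i).exists_infDist_eq_dist ⟨_, haA i⟩ _
  choose y hy hd using this
  obtain ⟨D, hD⟩ := hx
  have hle : ∀ i, ‖x i - y i‖ ≤ c := fun i => by rw [← dist_eq_norm, ← hd]; exact h i
  have hyb : Bdd y := by
    refine ⟨D + c, fun i => ?_⟩
    have : y i = x i - (x i - y i) := by abel
    rw [this]
    exact (norm_sub_le _ _).trans (add_le_add (hD i) (hle i))
  have hmem : supNorm (x - y) ∈ (fun y => supNorm (x - y)) '' setA A := ⟨y, ⟨hyb, hy⟩, rfl⟩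
  refine (csInf_le ⟨0, ?_⟩ hmem).trans (ciSup_le hle)
  rintro _ ⟨z, -, rfl⟩
  exact supNorm_nonneg' _

theorem inputNorm_bound {u : ℕ → ∀ i, P i} (hu : AdmInput u) (k : ℕ) :
    supNorm (u k) ≤ inputNorm u := by
  obtain ⟨C, hC⟩ := hu
  refine le_ciSup (f := fun k => supNorm (u k)) ⟨C, ?_⟩ k
  rintro _ ⟨j, rfl⟩
  exact ciSup_le (hC j)

theorem inputNorm_nonneg' (u : ℕ → ∀ i, P i) : 0 ≤ inputNorm u :=
  Real.iSup_nonneg fun _ => supNorm_nonneg' _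

theorem inputNorm_shift {u : ℕ → ∀ i, P i} (hu : AdmInput u) (k : ℕ) :
    inputNorm (fun n => u (k + n)) ≤ inputNorm u :=
  ciSup_le fun n => inputNorm_bound hu (k + n)

theorem traj_add' (F : (∀ i, E i) → (∀ i, P i) → ∀ i, E i)
    (ξ : ∀ i, E i) (u : ℕ → ∀ i, P i) (k j : ℕ) :
    traj F ξ u (k + j) = traj F (traj F ξ u k) (fun n => u (k + n)) j := by
  induction j with
  | zero => rfl
  | succ j ih =>
    show F (traj F ξ u (k + j)) (u (k + j)) = _
    rw [ih]; rfl

/-- Relaxed small-gain theorem: under the Lyapunov-type and uniformity assumptions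
and `K`-boundedness of `f` w.r.t. `A`, the infinite network is ISS w.r.t. `A`. -/
theorem stmt14
    [∀ i, NormedSpace ℝ (E i)] [∀ i, FiniteDimensional ℝ (E i)] [∀ i, Nontrivial (E i)]
    [∀ i, NormedSpace ℝ (P i)] [∀ i, FiniteDimensional ℝ (P i)] [∀ i, Nontrivial (P i)]
    (hself : ∀ i, i ∉ I i)
    (hloc : ∀ i, {j | i ∈ I j}.Finite)
    (f : ∀ i, E i → ((j : I i) → E j.1) → P i → E i)
    (hf : ∀ i, Continuous fun q : E i × ((j : I i) → E j.1) × P i => f i q.1 q.2.1 q.2.2)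
    (hwp : ∀ (x : ∀ i, E i) (u : ∀ i, P i), Bdd x → Bdd u → Bdd (netF I f x u))
    (A : ∀ i, Set (E i)) (hne : ∀ i, (A i).Nonempty) (hcl : ∀ i, IsClosed (A i))
    (hAne : (setA A).Nonempty)
    (M : ℕ) (hM : 0 < M)
    -- Lyapunov-type assumptions
    (W : ∀ i, E i → ℝ) (hWcont : ∀ i, Continuous (W i)) (hWnn : ∀ i ξi, 0 ≤ W i ξi)
    (ωl ωu : ℕ → ℝ → ℝ) (hωl : ∀ i, ClassKinf (ωl i)) (hωu : ∀ i, ClassKinf (ωu i))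
    (hsandwich : ∀ (i : ℕ) (ξi : E i),
      ωl i (Metric.infDist ξi (A i)) ≤ W i ξi ∧ W i ξi ≤ ωu i (Metric.infDist ξi (A i)))
    (γij : ℕ → ℕ → ℝ → ℝ)
    (hγij : ∀ i j, ClassKinf (γij i j) ∨ γij i j = fun _ => 0)
    (γiu : ℕ → ℝ → ℝ) (hγiu : ∀ i, ClassK (γiu i))
    (hdecay : ∀ (ξ : ∀ i, E i), Bdd ξ → ∀ u : ℕ → ∀ i, P i, AdmInput u →
      ∀ i, W i (traj (netF I f) ξ u M i) ≤
        max (⨆ j, γij i j (W j (ξ j))) (γiu i (inputNorm u)))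
    -- Uniformity assumptions
    (ωlb ωub : ℝ → ℝ) (hωlb : ClassKinf ωlb) (hωub : ClassKinf ωub)
    (hunifω : ∀ (i : ℕ) (s : ℝ), 0 ≤ s →
      ωlb s ≤ ωl i s ∧ ωl i s ≤ ωu i s ∧ ωu i s ≤ ωub s)
    (α : ℝ → ℝ) (hα : ClassKinf α) (hαid : ∀ s : ℝ, 0 < s → α s < s)
    (hunifγ : ∀ (i j : ℕ) (s : ℝ), 0 ≤ s → γij i j s ≤ α s)
    (γu : ℝ → ℝ) (hγu : ClassK γu)
    (hunifγu : ∀ (i : ℕ) (s : ℝ), 0 ≤ s → γiu i s ≤ γu s)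
    (hKb : ∃ κ₁ κ₂ : ℝ → ℝ, ClassK κ₁ ∧ ClassK κ₂ ∧
      ∀ (ξ : ∀ i, E i) (μ : ∀ i, P i), Bdd ξ → Bdd μ →
        distA (netF I f ξ μ) (setA A) ≤ κ₁ (distA ξ (setA A)) + κ₂ (supNorm μ))
    :
    ∃ β γ : _, ClassKL β ∧ ClassK γ ∧
      ∀ (ξ : ∀ i, E i), Bdd ξ → ∀ u : ℕ → ∀ i, P i, AdmInput u →
        ∀ k : ℕ, distA (traj (netF I f) ξ u k) (setA A) ≤
          max (β (distA ξ (setA A)) (k : ℝ)) (γ (inputNorm u)) := by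
  obtain ⟨κ₁, κ₂, hκ₁, hκ₂, hK⟩ := hKb
  obtain ⟨g, hg, hgi⟩ := hωlb.inv'
  obtain ⟨σ, ρ, hσ, hρ, H⟩ := kbound_iter hκ₁ hκ₂ M
  have hh := hωub.1.comp' hσ
  obtain ⟨β, hβ, hβle⟩ := exists_KL hα.1 hαid hg hh hM
  have hq := (hωub.1.comp' hρ).add' hγu
  refine ⟨β, _, hβ, hg.comp' hq, ?_⟩
  intro ξ hξ u hu k
  have hub : ∀ k, Bdd (u k) := fun k => by
    obtain ⟨C, hC⟩ := hu
    exact ⟨C, hC k⟩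
  have hus : ∀ k, AdmInput (fun n => u (k + n)) := fun k => by
    obtain ⟨C, hC⟩ := hu
    exact ⟨C, fun n => hC _⟩
  have hxb : ∀ k, Bdd (traj (netF I f) ξ u k) := by
    intro k
    induction k with
    | zero => exact hξ
    | succ k ih => exact hwp _ _ ih (hub k)
  set t := inputNorm u with ht
  have ht0 : 0 ≤ t := inputNorm_nonneg' u
  set x := traj (netF I f) ξ u with hx
  set r := k % M with hr
  set n := k / M with hn
  set s := distA ξ (setA A) with hs
  have hs0 : 0 ≤ s := distA_nonneg' _ _
  have hD : distA (x r) (setA A) ≤ max (σ s) (ρ t) := by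
    refine H (fun k => distA (x k) (setA A)) t ht0 (fun k => distA_nonneg' _ _) ?_ r
      (Nat.mod_lt k hM).le
    intro k
    refine (hK (x k) (u k) (hxb k) (hub k)).trans ?_
    have := hκ₂.mono' (supNorm_nonneg' (u k)) (inputNorm_bound hu k)
    linarith
  set c := ωub (distA (x r) (setA A)) with hc
  have hc0 : 0 ≤ c := hωub.1.nonneg' (distA_nonneg' _ _)
  have hγ0 : 0 ≤ γu t := hγu.nonneg' ht0
  have hstep : ∀ m i, W i (x (r + m * M) i) ≤ max (α^[m] c) (γu t) := by
    intro m
    induction m with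
    | zero =>
      intro i
      refine le_trans ?_ (le_max_left _ _)
      rw [Nat.zero_mul, Nat.add_zero]
      refine (hsandwich i _).2.trans ((hunifω i _ Metric.infDist_nonneg).2.2.trans ?_)
      exact hωub.1.mono' Metric.infDist_nonneg (infDist_le_distA (hxb r) hAne i)
    | succ m ih =>
      intro i
      have e : r + (m + 1) * M = (r + m * M) + M := by ring
      have e2 : x (r + (m + 1) * M) =
          traj (netF I f) (x (r + m * M)) (fun n => u (r + m * M + n)) M := by rw [e, hx]; exact traj_add' _ _ _ _ _
      rw [e2]
      refine (hdecay _ (hxb (r + m * M)) _ (hus (r + m * M)) i).trans (max_le ?_ ?_)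
      · refine ciSup_le fun j => ?_
        refine (hunifγ i j _ (hWnn j _)).trans ?_
        have := hα.1.max_le' (hWnn j _) (iter_nonneg' hα.1 m hc0) hγ0 (ih j)
        rw [Function.iterate_succ_apply']
        exact this.trans (max_le_max le_rfl (le_self' hα.1 hαid hγ0))
      · refine le_trans ?_ (le_max_right _ _)
        refine (hunifγu i _ (inputNorm_nonneg' _)).trans ?_
        exact hγu.mono' (inputNorm_nonneg' _) (inputNorm_shift hu _)
  have hk : r + n * M = k := by rw [hr, hn, mul_comm]; exact Nat.mod_add_div k M
  have hρ0 : 0 ≤ ωub (ρ t) := hωub.1.nonneg' (hρ.nonneg' ht0)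
  have hhs : 0 ≤ ωub (σ s) := hωub.1.nonneg' (hσ.nonneg' hs0)
  have hcle : c ≤ max (ωub (σ s)) (ωub (ρ t)) :=
    hωub.1.max_le' (distA_nonneg' _ _) (hσ.nonneg' hs0) (hρ.nonneg' ht0) hD
  have hac : α^[n] c ≤ max (α^[n] (ωub (σ s))) (ωub (ρ t)) := by
    refine ((iter_classK' hα.1 n).max_le' hc0 hhs hρ0 hcle).trans (max_le_max le_rfl ?_)
    exact iter_anti' hα.1 hαid hρ0 (Nat.zero_le n)
  have hA0 : 0 ≤ α^[n] (ωub (σ s)) := iter_nonneg' hα.1 n hhs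
  apply distA_le' (hxb k) hcl hAne
  intro i
  have h1 := hstep n i
  rw [hk] at h1
  have hd0 : 0 ≤ Metric.infDist (x k i) (A i) := Metric.infDist_nonneg
  have h2 : ωlb (Metric.infDist (x k i) (A i)) ≤
      max (α^[n] (ωub (σ s))) (ωub (ρ t) + γu t) := by
    refine (hunifω i _ hd0).1.trans ((hsandwich i _).1.trans (h1.trans (max_le ?_ ?_)))
    · exact hac.trans (max_le_max le_rfl (by linarith))
    · exact le_trans (by linarith) (le_max_right _ _)
  have h3 := hg.max_le' (hωlb.1.nonneg' hd0) hA0 (by linarith) h2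
  rw [hgi _ hd0] at h3
  exact h3.trans (max_le_max (hβle s hs0 k) le_rfl)

end Network
end
end

section
/- Consider a well-posed infinite network Σ and nonempty closed sets A_i ⊆ ℝ^{n_i} with A = X ∩ ∏_{i∈ℕ} A_i nonempty. If Σ is eISS with respect to A, then there exist M ∈ ℕ, a constant c ∈ [0,1) and γ of class K such that the functions W_i(x_i) := |x_i|_{A_i} satisfy, for all i ∈ ℕ, all ξ ∈ X and all admissible inputs u: |x_i(M,ξ,u)|_{A_i} ≤ max{sup_{j∈ℕ} c·|ξ_j|_{A_j}, γ(‖u‖_∞)}. In particular, the Lyapunov-type and uniformity assumptions hold with W_i = |·|_{A_i}, ω̲_i = ω̄_i = id, γ_ij(s) = c·s, γ_iu = γ, α(s) = c·s and γ̄_u = γ. -/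
noncomputable section

section Network

variable {E : ℕ → Type*} [∀ i, NormedAddCommGroup (E i)]
variable {P : ℕ → Type*} [∀ i, NormedAddCommGroup (P i)]

variable (I : ℕ → Finset ℕ)

theorem aux_sub_bddAbove {x y : ∀ i, E i} (hx : Bdd x) (hy : Bdd y) :
    BddAbove (Set.range fun i => ‖(x - y) i‖) := by
  obtain ⟨a, ha⟩ := hx
  obtain ⟨b, hb⟩ := hy
  refine ⟨a + b, ?_⟩
  rintro _ ⟨i, rfl⟩
  exact (norm_sub_le _ _).trans (add_le_add (ha i) (hb i))

theorem aux_infDist_le (A : ∀ i, Set (E i)) (hAne : (setA A).Nonempty)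
    {x : ∀ i, E i} (hx : Bdd x) (i : ℕ) :
    Metric.infDist (x i) (A i) ≤ distA x (setA A) := by
  refine le_csInf (hAne.image _) ?_
  rintro _ ⟨y, hy, rfl⟩
  refine (Metric.infDist_le_dist_of_mem (hy.2 i)).trans ?_
  rw [dist_eq_norm]
  exact le_ciSup (aux_sub_bddAbove hx hy.1) i

theorem aux_distA_le [∀ i, NormedSpace ℝ (E i)] [∀ i, FiniteDimensional ℝ (E i)]
    (A : ∀ i, Set (E i)) (hne : ∀ i, (A i).Nonempty) (hcl : ∀ i, IsClosed (A i))
    (hAne : (setA A).Nonempty) {x : ∀ i, E i} (hx : Bdd x) :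
    distA x (setA A) ≤ ⨆ j, Metric.infDist (x j) (A j) := by
  have key : ∀ i, ∃ y ∈ A i, Metric.infDist (x i) (A i) = dist (x i) y := fun i => by
    haveI : ProperSpace (E i) := FiniteDimensional.proper ℝ (E i)
    exact (hcl i).exists_infDist_eq_dist (hne i) (x i)
  choose y hyA hyd using key
  obtain ⟨z, hz⟩ := hAne
  have hyB : Bdd y := by
    obtain ⟨a, ha⟩ := hx
    obtain ⟨b, hb⟩ := hz.1
    refine ⟨a + (a + b), fun i => ?_⟩
    have h1 : dist (x i) (y i) ≤ a + b := by
      rw [← hyd i]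
      refine (Metric.infDist_le_dist_of_mem (hz.2 i)).trans ?_
      rw [dist_eq_norm]
      exact (norm_sub_le _ _).trans (add_le_add (ha i) (hb i))
    rw [dist_eq_norm] at h1
    have h2 : ‖y i‖ ≤ ‖x i‖ + ‖x i - y i‖ := by
      have := norm_sub_le (x i) (x i - y i)
      simpa using this
    linarith [ha i]
  have h : supNorm (x - y) = ⨆ j, Metric.infDist (x j) (A j) := by
    unfold supNorm
    congr 1
    funext i
    rw [hyd i, dist_eq_norm]
    rfl
  rw [← h]
  refine csInf_le ⟨0, ?_⟩ ⟨y, ⟨hyB, hyA⟩, rfl⟩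
  rintro _ ⟨w, _, rfl⟩
  exact Real.iSup_nonneg fun i => norm_nonneg _

theorem aux_traj_bdd (F : (∀ i, E i) → (∀ i, P i) → ∀ i, E i)
    (hwp : ∀ x u, Bdd x → Bdd u → Bdd (F x u))
    {ξ : ∀ i, E i} (hξ : Bdd ξ) {u : ℕ → ∀ i, P i} (hu : AdmInput u) (k : ℕ) :
    Bdd (traj F ξ u k) := by
  induction k with
  | zero => exact hξ
  | succ k ih =>
    obtain ⟨C, hC⟩ := hu
    exact hwp _ _ ih ⟨C, hC k⟩

/-- Necessity of the small-gain condition: if the well-posed infinite network is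
eISS w.r.t. `A`, then the functions `W_i = dist(·, A_i)` satisfy the Lyapunov-type
estimate with identical linear gains `c < 1`. -/
theorem stmt15
    [∀ i, NormedSpace ℝ (E i)] [∀ i, FiniteDimensional ℝ (E i)] [∀ i, Nontrivial (E i)]
    [∀ i, NormedSpace ℝ (P i)] [∀ i, FiniteDimensional ℝ (P i)] [∀ i, Nontrivial (P i)]
    (hself : ∀ i, i ∉ I i)
    (hloc : ∀ i, {j | i ∈ I j}.Finite)
    (f : ∀ i, E i → ((j : I i) → E j.1) → P i → E i)
    (hf : ∀ i, Continuous fun q : E i × ((j : I i) → E j.1) × P i => f i q.1 q.2.1 q.2.2)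
    (hwp : ∀ (x : ∀ i, E i) (u : ∀ i, P i), Bdd x → Bdd u → Bdd (netF I f x u))
    (A : ∀ i, Set (E i)) (hne : ∀ i, (A i).Nonempty) (hcl : ∀ i, IsClosed (A i))
    (hAne : (setA A).Nonempty)
    (heISS : ∃ C ρ : ℝ, ∃ γ : ℝ → ℝ, 1 ≤ C ∧ 0 ≤ ρ ∧ ρ < 1 ∧ ClassK γ ∧
      ∀ (ξ : ∀ i, E i), Bdd ξ → ∀ u : ℕ → ∀ i, P i, AdmInput u →
        ∀ k : ℕ, distA (traj (netF I f) ξ u k) (setA A) ≤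
          max (C * ρ ^ k * distA ξ (setA A)) (γ (inputNorm u))) :
    ∃ M : ℕ, 0 < M ∧ ∃ c : ℝ, 0 ≤ c ∧ c < 1 ∧ ∃ γ : ℝ → ℝ, ClassK γ ∧
      ∀ (ξ : ∀ i, E i), Bdd ξ → ∀ u : ℕ → ∀ i, P i, AdmInput u →
        ∀ i : ℕ, Metric.infDist (traj (netF I f) ξ u M i) (A i) ≤
          max (⨆ j, c * Metric.infDist (ξ j) (A j)) (γ (inputNorm u)) := by
  obtain ⟨C, ρ, γ, hC, hρ0, hρ1, hγ, h⟩ := heISS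
  obtain ⟨n, hn⟩ := exists_pow_lt_of_lt_one (show (0 : ℝ) < 1 / C by positivity) hρ1
  have hc0 : 0 ≤ C * ρ ^ (n + 1) := by positivity
  refine ⟨n + 1, n.succ_pos, C * ρ ^ (n + 1), hc0, ?_, γ, hγ, ?_⟩
  · have h1 : ρ ^ (n + 1) ≤ ρ ^ n := pow_le_pow_of_le_one hρ0 hρ1.le n.le_succ
    have h2 := (lt_div_iff₀' (by linarith)).1 (h1.trans_lt hn)
    exact h2
  · intro ξ hξ u hu i
    refine (aux_infDist_le A hAne (aux_traj_bdd _ hwp hξ hu _) i).trans ?_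
    refine (h ξ hξ u hu (n + 1)).trans (max_le_max ?_ le_rfl)
    rw [← Real.mul_iSup_of_nonneg hc0]
    exact mul_le_mul_of_nonneg_left (aux_distA_le A hne hcl hAne hξ) hc0

end Network
end
end
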